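/- Let d ≥ 1 and let α = (α_1,…,α_d) be a multi-index with α_j > −1/2 for each j. There exists a constant C > 0, depending only on α and d, such that for every t > 0 and every x ∈ (0,∞)^d, the integral of |∂p_t^α(x,y)/∂t| over the region F_t(x) = { y ∈ (0,∞)^d : √(e^{−t} x_j y_j) > 1 − e^{−t} for all j = 1,…,d } satisfies ∫_{F_t(x)} |∂p_t^α(x,y)/∂t| dy ≤ C/t. -/

import Mathlib

open MeasureTheory Real Set

noncomputable def besselI (ν z : ℝ) : ℝ :=
  ∑' m : ℕ, (z / 2) ^ (2 * (m : ℝ) + ν) / (Nat.factorial m * Real.Gamma ((m : ℝ) + ν + 1))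

/-- The positive orthant `(0,∞)^d`. -/
def posOrthant (d : ℕ) : Set (Fin d → ℝ) := Set.univ.pi fun _ => Set.Ioi 0

/-- The Poisson–Laguerre kernel `p_t^α(x,y)`. -/
noncomputable def plKernel (d : ℕ) (α : Fin d → ℝ) (t : ℝ) (x y : Fin d → ℝ) : ℝ :=
  (1 / (2 * Real.sqrt π)) *
    ∫ r in Set.Ioo (0 : ℝ) 1,
      (t * Real.exp (t ^ 2 / (4 * Real.log r)) /
          ((1 - r) ^ d * (-Real.log r) ^ ((3 : ℝ) / 2))) *
        (∏ j, (y j / x j) ^ (α j / 2) *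
            Real.exp (-((r * x j + y j) / (1 - r)) - α j * Real.log r / 2) *
            besselI (α j) (2 * Real.sqrt (r * x j * y j) / (1 - r))) / r

/-- The Poisson–Laguerre semigroup `P_t^α f`, with the convention `P_0^α f = f`. -/
noncomputable def plP (d : ℕ) (α : Fin d → ℝ) (t : ℝ)
    (f : (Fin d → ℝ) → ℝ) (x : Fin d → ℝ) : ℝ :=
  if t = 0 then f x else ∫ y in posOrthant d, plKernel d α t x y * f y

/-!
With `s = -log r`, the defining integral becomes Bochner's subordination formula: the Poisson kernel
is the average `∫ μ_t(s) W_s(x,y) ds` of Laguerre heat kernels against the density `μ_t` of a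
one-sided `1/2`-stable law. Differentiating `μ_t` gives `|∂_t μ_t| ≤ (1/t + t/(2s)) μ_t`, whose
integral in `s` is `2/t`. Each one-dimensional factor of `W_s(x,·)` is a Poisson mixture of gamma
densities, hence `W_s(x,·)` has `L¹` norm at most `1`, and Tonelli's theorem bounds the `L¹` norm of
the derivative on the whole orthant by `2/t`.
-/

section ChangeOfVariables

lemma image_exp_neg_Ioi_zero : (fun s : ℝ => exp (-s)) '' Ioi 0 = Ioo 0 1 := by
  ext r
  constructor
  · rintro ⟨s, hs, rfl⟩
    exact ⟨exp_pos _, exp_lt_one_iff.2 (neg_lt_zero.2 hs)⟩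
  · rintro ⟨hr0, hr1⟩
    exact ⟨-log r, neg_pos.2 (log_neg hr0 hr1), by simp only [neg_neg, exp_log hr0]⟩

lemma integral_Ioo_zero_one_eq_integral_comp_exp_neg {E : Type*} [NormedAddCommGroup E]
    [NormedSpace ℝ E] (f : ℝ → E) :
    ∫ r in Ioo (0 : ℝ) 1, f r = ∫ s in Ioi (0 : ℝ), exp (-s) • f (exp (-s)) := by
  have hderiv (s : ℝ) : HasDerivAt (fun s : ℝ => exp (-s)) (-exp (-s)) s := by
    simpa using (hasDerivAt_neg s).exp
  have hanti : AntitoneOn (fun s : ℝ => exp (-s)) (Ioi 0) :=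
    fun _ _ _ _ h => exp_le_exp.2 (neg_le_neg h)
  simpa only [image_exp_neg_Ioi_zero, neg_neg] using
    integral_image_eq_integral_deriv_smul_of_antitoneOn measurableSet_Ioi
      (fun s _ => (hderiv s).hasDerivWithinAt) hanti f

variable {a b : ℝ}

lemma integral_rpow_mul_exp_neg_div_Ioi (ha : 0 < a) (hb : 0 < b) :
    ∫ s in Ioi (0 : ℝ), s ^ (-a - 1) * exp (-(b / s)) = (1 / b) ^ a * Gamma a := by
  rw [← integral_rpow_mul_exp_neg_mul_Ioi ha hb,
    ← integral_comp_rpow_Ioi _ (neg_ne_zero.2 one_ne_zero)]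
  refine setIntegral_congr_fun measurableSet_Ioi fun s (hs : 0 < s) => ?_
  simp only [smul_eq_mul, abs_neg, abs_one, one_mul]
  rw [← rpow_mul hs.le, rpow_neg_one, ← mul_assoc, ← rpow_add hs, div_inv_eq_mul]
  congr 2
  ring

lemma integrableOn_rpow_mul_exp_neg_div_Ioi (ha : 0 < a) (hb : 0 < b) :
    IntegrableOn (fun s : ℝ => s ^ (-a - 1) * exp (-(b / s))) (Ioi 0) := by
  refine .of_integral_ne_zero ?_
  rw [integral_rpow_mul_exp_neg_div_Ioi ha hb]
  exact (mul_pos (rpow_pos_of_pos (one_div_pos.2 hb) _) (Gamma_pos_of_pos ha)).ne'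

end ChangeOfVariables

section LevyDensity

/-- The density at `s` of the one-sided stable law of index `1/2` with parameter `t`, by which the
heat semigroup is averaged over time in Bochner's formula for the Poisson semigroup. -/
noncomputable def levyDensity (t s : ℝ) : ℝ :=
  t / (2 * √π) * s ^ (-(3 / 2) : ℝ) * exp (-(t ^ 2 / (4 * s)))

/-- The derivative of `levyDensity t s` in `t`, for `t ≠ 0`. -/
noncomputable def levyDensityDeriv (t s : ℝ) : ℝ :=
  (t⁻¹ - t / (2 * s)) * levyDensity t s

/-- The sum of the absolute values of the two terms of `levyDensityDeriv`. Up to a constant, its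
value at time `t / 2` dominates its values at all times near `t`. -/
noncomputable def levyMajorant (t s : ℝ) : ℝ :=
  (t⁻¹ + t / (2 * s)) * levyDensity t s

lemma measurable_levyDensity (t : ℝ) : Measurable (levyDensity t) := by
  unfold levyDensity
  fun_prop

lemma measurable_levyDensityDeriv (t : ℝ) : Measurable (levyDensityDeriv t) :=
  (by fun_prop : Measurable fun s : ℝ => t⁻¹ - t / (2 * s)).mul (measurable_levyDensity t)

lemma measurable_levyMajorant (t : ℝ) : Measurable (levyMajorant t) :=
  (by fun_prop : Measurable fun s : ℝ => t⁻¹ + t / (2 * s)).mul (measurable_levyDensity t)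

variable {t s : ℝ}

lemma levyDensity_nonneg (ht : 0 ≤ t) (hs : 0 ≤ s) : 0 ≤ levyDensity t s := by
  unfold levyDensity
  positivity

lemma hasDerivAt_levyDensity (ht : t ≠ 0) (s : ℝ) :
    HasDerivAt (fun u => levyDensity u s) (levyDensityDeriv t s) t := by
  have h := (((hasDerivAt_id t).div_const (2 * √π)).mul_const (s ^ (-(3 / 2) : ℝ))).mul
    ((hasDerivAt_pow 2 t).div_const (4 * s)).neg.exp
  convert! h using 1
  simp only [levyDensityDeriv, levyDensity, id, Pi.neg_apply]
  field_simp
  push_cast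
  ring

lemma abs_levyDensityDeriv_le (ht : 0 < t) (hs : 0 < s) :
    |levyDensityDeriv t s| ≤ levyMajorant t s := by
  have hμ := levyDensity_nonneg ht.le hs.le
  rw [levyDensityDeriv, abs_mul, abs_of_nonneg hμ, levyMajorant]
  gcongr
  exact (abs_sub _ _).trans_eq (by rw [abs_of_pos (by positivity), abs_of_pos (by positivity)])

lemma levyDensity_le_mul_levyMajorant (ht : 0 < t) (hs : 0 < s) :
    levyDensity t s ≤ t * levyMajorant t s := by
  have hμ := levyDensity_nonneg ht.le hs.le
  rw [levyMajorant, ← mul_assoc, mul_add, mul_inv_cancel₀ ht.ne']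
  exact le_mul_of_one_le_left hμ (le_add_of_nonneg_right (by positivity))

lemma levyMajorant_eq (ht : t ≠ 0) (s : ℝ) :
    levyMajorant t s =
      (1 + t ^ 2 / (2 * s)) * (s ^ (-(3 / 2) : ℝ) / (2 * √π)) * exp (-(t ^ 2 / (4 * s))) := by
  rw [levyMajorant, levyDensity]
  field_simp

lemma levyMajorant_le_sq_mul_levyMajorant {u c : ℝ} (ht : 0 < t) (htu : t ≤ u) (huc : u ≤ c * t)
    (hs : 0 < s) : levyMajorant u s ≤ c ^ 2 * levyMajorant t s := by
  have hu : 0 < u := ht.trans_le htu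
  have hc : 1 ≤ c := le_of_mul_le_mul_right (by linarith) ht
  rw [levyMajorant_eq hu.ne', levyMajorant_eq ht.ne', ← mul_assoc, ← mul_assoc]
  gcongr
  calc 1 + u ^ 2 / (2 * s) ≤ c ^ 2 + (c * t) ^ 2 / (2 * s) := by
        gcongr
        exact one_le_pow₀ hc
    _ = c ^ 2 * (1 + t ^ 2 / (2 * s)) := by ring

lemma levyMajorant_eq_add_rpow_mul_exp (ht : t ≠ 0) (hs : 0 < s) :
    levyMajorant t s = (2 * √π)⁻¹ * (s ^ (-(1 / 2) - 1 : ℝ) * exp (-(t ^ 2 / 4 / s))) +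
      t ^ 2 / (4 * √π) * (s ^ (-(3 / 2) - 1 : ℝ) * exp (-(t ^ 2 / 4 / s))) := by
  have hpow : (-(1 / 2) - 1 : ℝ) = -(3 / 2) := by norm_num
  rw [levyMajorant_eq ht, rpow_sub_one hs.ne' (-(3 / 2)), hpow, div_div]
  field_simp
  ring

lemma integrableOn_levyMajorant (ht : t ≠ 0) : IntegrableOn (levyMajorant t) (Ioi 0) := by
  have hb : 0 < t ^ 2 / 4 := by positivity
  exact IntegrableOn.congr_fun (((integrableOn_rpow_mul_exp_neg_div_Ioi one_half_pos hb).const_mul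
    _).add ((integrableOn_rpow_mul_exp_neg_div_Ioi (by norm_num) hb).const_mul _))
    (fun s hs => (levyMajorant_eq_add_rpow_mul_exp ht hs).symm) measurableSet_Ioi

lemma integral_levyMajorant (ht : 0 < t) : ∫ s in Ioi 0, levyMajorant t s = 2 / t := by
  have hb : 0 < t ^ 2 / 4 := by positivity
  have hint {a : ℝ} (ha : 0 < a) := integrableOn_rpow_mul_exp_neg_div_Ioi ha hb
  have hhalf : (1 / (t ^ 2 / 4)) ^ (1 / 2 : ℝ) = 2 / t := by
    rw [← sqrt_eq_rpow, one_div_div, sqrt_div (by norm_num), sqrt_sq ht.le,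
      show (4 : ℝ) = 2 ^ 2 by norm_num, sqrt_sq zero_le_two]
  have hthree : (1 / (t ^ 2 / 4)) ^ (3 / 2 : ℝ) = 8 / t ^ 3 := by
    rw [show (3 / 2 : ℝ) = 1 / 2 + 1 by norm_num, rpow_add_one (by positivity), hhalf]
    field_simp
    norm_num
  have hΓ : Gamma (3 / 2) = √π / 2 := by
    rw [show (3 / 2 : ℝ) = 1 / 2 + 1 by norm_num, Gamma_add_one (by norm_num), Gamma_one_half_eq]
    ring
  rw [setIntegral_congr_fun measurableSet_Ioi
      fun s hs => levyMajorant_eq_add_rpow_mul_exp ht.ne' hs,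
    integral_add ((hint one_half_pos).const_mul _) ((hint (by norm_num)).const_mul _),
    integral_const_mul, integral_const_mul, integral_rpow_mul_exp_neg_div_Ioi one_half_pos hb,
    integral_rpow_mul_exp_neg_div_Ioi (by norm_num) hb, hhalf, hthree, hΓ, Gamma_one_half_eq]
  field_simp
  norm_num

lemma lintegral_enorm_levyMajorant (ht : 0 < t) :
    ∫⁻ s in Ioi 0, ‖levyMajorant t s‖ₑ = ENNReal.ofReal (2 / t) := by
  have hnonneg : ∀ s ∈ Ioi (0 : ℝ), ‖levyMajorant t s‖ = levyMajorant t s := fun s hs =>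
    norm_of_nonneg ((abs_nonneg _).trans (abs_levyDensityDeriv_le ht hs))
  rw [← ofReal_integral_norm_eq_lintegral_enorm (integrableOn_levyMajorant ht.ne'),
    setIntegral_congr_fun measurableSet_Ioi hnonneg, integral_levyMajorant ht]

end LevyDensity

section Subordination

open Function

variable {E : Type*} [NormedAddCommGroup E] [NormedSpace ℝ E] {t : ℝ}

/-- Bochner's subordination formula, giving the value at time `t` of the Poisson semigroup from the
values `w s` of a heat semigroup. -/
noncomputable def poissonSubordinate (w : ℝ → E) (t : ℝ) : E :=
  ∫ s in Ioi 0, levyDensity t s • w s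

lemma hasDerivAt_poissonSubordinate {w : ℝ → E}
    (hw : AEStronglyMeasurable w (volume.restrict (Ioi 0))) (ht : 0 < t)
    (hint : IntegrableOn (fun s => levyMajorant (t / 2) s • w s) (Ioi 0)) :
    HasDerivAt (poissonSubordinate w) (∫ s in Ioi 0, levyDensityDeriv t s • w s) t := by
  have hball : t ∈ Metric.ball t (t / 2) := Metric.mem_ball_self (half_pos ht)
  have hpos {u : ℝ} (hu : u ∈ Metric.ball t (t / 2)) : 0 < u := by
    rw [Metric.mem_ball, dist_eq, abs_lt] at hu
    linarith
  have hmajorant {u s : ℝ} (hu : u ∈ Metric.ball t (t / 2)) (hs : 0 < s) :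
      levyMajorant u s ≤ 3 ^ 2 * levyMajorant (t / 2) s := by
    rw [Metric.mem_ball, dist_eq, abs_lt] at hu
    exact levyMajorant_le_sq_mul_levyMajorant (half_pos ht) (by linarith) (by linarith) hs
  have hsmul {k c s : ℝ} (hc : 0 ≤ c) (h : |k| ≤ c * levyMajorant (t / 2) s) :
      ‖k • w s‖ ≤ c * ‖levyMajorant (t / 2) s • w s‖ := by
    rw [norm_smul, norm_smul, ← mul_assoc]
    gcongr
    exact h.trans (by gcongr; exact le_norm_self _)
  have hF : IntegrableOn (fun s => levyDensity t s • w s) (Ioi 0) := by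
    refine (hint.norm.const_mul (t * 3 ^ 2)).mono'
      ((measurable_levyDensity t).aestronglyMeasurable.smul hw) ?_
    filter_upwards [ae_restrict_mem measurableSet_Ioi] with s hs
    refine hsmul (by positivity) ?_
    rw [abs_of_nonneg (levyDensity_nonneg ht.le (le_of_lt hs)), mul_assoc]
    exact (levyDensity_le_mul_levyMajorant ht hs).trans (by gcongr; exact hmajorant hball hs)
  have hF' : ∀ᵐ s ∂volume.restrict (Ioi 0), ∀ u ∈ Metric.ball t (t / 2),
      ‖levyDensityDeriv u s • w s‖ ≤ 3 ^ 2 * ‖levyMajorant (t / 2) s • w s‖ := by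
    filter_upwards [ae_restrict_mem measurableSet_Ioi] with s hs u hu
    exact hsmul (by positivity) ((abs_levyDensityDeriv_le (hpos hu) hs).trans (hmajorant hu hs))
  exact (hasDerivAt_integral_of_dominated_loc_of_deriv_le
    (Metric.ball_mem_nhds t (half_pos ht))
    (.of_forall fun u => (measurable_levyDensity u).aestronglyMeasurable.smul hw) hF
    ((measurable_levyDensityDeriv t).aestronglyMeasurable.smul hw) hF' (hint.norm.const_mul _)
    (.of_forall fun s u hu => (hasDerivAt_levyDensity (hpos hu).ne' s).smul_const (w s))).2

variable {Y : Type*} [MeasurableSpace Y] {μ : Measure Y} [SFinite μ] {W : ℝ → Y → E}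

lemma lintegral_enorm_levyMajorant_smul_le (hW : StronglyMeasurable (uncurry W))
    (hcontr : ∀ s > 0, ∫⁻ y, ‖W s y‖ₑ ∂μ ≤ 1) (ht : 0 < t) :
    ∫⁻ p, ‖levyMajorant t p.1 • W p.1 p.2‖ₑ ∂(volume.restrict (Ioi 0)).prod μ ≤
      ENNReal.ofReal (2 / t) := by
  have hmeas : StronglyMeasurable fun p : ℝ × Y => levyMajorant t p.1 • W p.1 p.2 :=
    ((measurable_levyMajorant t).stronglyMeasurable.comp_measurable measurable_fst).smul hW
  calc ∫⁻ p, ‖levyMajorant t p.1 • W p.1 p.2‖ₑ ∂(volume.restrict (Ioi 0)).prod μ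
      = ∫⁻ s in Ioi 0, ‖levyMajorant t s‖ₑ * ∫⁻ y, ‖W s y‖ₑ ∂μ := by
        rw [lintegral_prod _ hmeas.enorm.aemeasurable]
        simp only [enorm_smul, lintegral_const_mul' _ _ enorm_ne_top]
    _ ≤ ∫⁻ s in Ioi 0, ‖levyMajorant t s‖ₑ :=
        setLIntegral_mono' measurableSet_Ioi fun s hs => mul_le_of_le_one_right' (hcontr s hs)
    _ = ENNReal.ofReal (2 / t) := lintegral_enorm_levyMajorant ht

lemma integrable_levyMajorant_smul (hW : StronglyMeasurable (uncurry W))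
    (hcontr : ∀ s > 0, ∫⁻ y, ‖W s y‖ₑ ∂μ ≤ 1) (ht : 0 < t) :
    Integrable (fun p : ℝ × Y => levyMajorant t p.1 • W p.1 p.2)
      ((volume.restrict (Ioi 0)).prod μ) :=
  ⟨(((measurable_levyMajorant t).stronglyMeasurable.comp_measurable measurable_fst).smul
      hW).aestronglyMeasurable,
    (lintegral_enorm_levyMajorant_smul_le hW hcontr ht).trans_lt ENNReal.ofReal_lt_top⟩

lemma ae_hasDerivAt_poissonSubordinate (hW : StronglyMeasurable (uncurry W))
    (hcontr : ∀ s > 0, ∫⁻ y, ‖W s y‖ₑ ∂μ ≤ 1) (ht : 0 < t) :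
    ∀ᵐ y ∂μ, HasDerivAt (poissonSubordinate (W · y))
      (∫ s in Ioi 0, levyDensityDeriv t s • W s y) t := by
  filter_upwards [(integrable_levyMajorant_smul hW hcontr (half_pos ht)).prod_left_ae] with y hy
  exact hasDerivAt_poissonSubordinate
    (hW.comp_measurable measurable_prodMk_right).aestronglyMeasurable ht hy

lemma lintegral_enorm_deriv_poissonSubordinate_le (hW : StronglyMeasurable (uncurry W))
    (hcontr : ∀ s > 0, ∫⁻ y, ‖W s y‖ₑ ∂μ ≤ 1) (ht : 0 < t) :
    ∫⁻ y, ‖deriv (poissonSubordinate (W · y)) t‖ₑ ∂μ ≤ ENNReal.ofReal (2 / t) := by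
  have hle : ∀ s ∈ Ioi (0 : ℝ), ∀ y,
      ‖levyDensityDeriv t s • W s y‖ₑ ≤ ‖levyMajorant t s • W s y‖ₑ := fun s hs y => by
    rw [enorm_smul, enorm_smul]
    gcongr
    exact enorm_le_iff_norm_le.2 ((abs_levyDensityDeriv_le ht hs).trans (le_norm_self _))
  calc ∫⁻ y, ‖deriv (poissonSubordinate (W · y)) t‖ₑ ∂μ
      = ∫⁻ y, ‖∫ s in Ioi 0, levyDensityDeriv t s • W s y‖ₑ ∂μ :=
        lintegral_congr_ae ((ae_hasDerivAt_poissonSubordinate hW hcontr ht).mono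
          fun y hy => by simp only [hy.deriv])
    _ ≤ ∫⁻ y, (∫⁻ s in Ioi 0, ‖levyMajorant t s • W s y‖ₑ) ∂μ :=
        lintegral_mono fun y => (enorm_integral_le_lintegral_enorm _).trans
          (setLIntegral_mono' measurableSet_Ioi fun s hs => hle s hs y)
    _ = ∫⁻ p, ‖levyMajorant t p.1 • W p.1 p.2‖ₑ ∂(volume.restrict (Ioi 0)).prod μ :=
        (lintegral_prod_symm _
          (integrable_levyMajorant_smul hW hcontr ht).aestronglyMeasurable.enorm).symm
    _ ≤ ENNReal.ofReal (2 / t) := lintegral_enorm_levyMajorant_smul_le hW hcontr ht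

lemma integrable_deriv_poissonSubordinate (hW : StronglyMeasurable (uncurry W))
    (hcontr : ∀ s > 0, ∫⁻ y, ‖W s y‖ₑ ∂μ ≤ 1) (ht : 0 < t) :
    Integrable (fun y => deriv (poissonSubordinate (W · y)) t) μ := by
  have hmeas : StronglyMeasurable fun y => ∫ s in Ioi 0, levyDensityDeriv t s • W s y :=
    (((measurable_levyDensityDeriv t).stronglyMeasurable.comp_measurable measurable_fst).smul
      hW).integral_prod_left'
  exact ⟨hmeas.aestronglyMeasurable.congr ((ae_hasDerivAt_poissonSubordinate hW hcontr ht).mono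
      fun y hy => hy.deriv.symm),
    (lintegral_enorm_deriv_poissonSubordinate_le hW hcontr ht).trans_lt ENNReal.ofReal_lt_top⟩

theorem integral_norm_deriv_poissonSubordinate_le (hW : StronglyMeasurable (uncurry W))
    (hcontr : ∀ s > 0, ∫⁻ y, ‖W s y‖ₑ ∂μ ≤ 1) (ht : 0 < t) :
    ∫ y, ‖deriv (poissonSubordinate (W · y)) t‖ ∂μ ≤ 2 / t := by
  rw [← ENNReal.ofReal_le_ofReal_iff (by positivity),
    ofReal_integral_norm_eq_lintegral_enorm (integrable_deriv_poissonSubordinate hW hcontr ht)]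
  exact lintegral_enorm_deriv_poissonSubordinate_le hW hcontr ht

end Subordination

lemma measurable_besselI (ν : ℝ) : Measurable (besselI ν) := by
  unfold besselI
  fun_prop

lemma besselI_two_mul_sqrt (ν : ℝ) {z : ℝ} (hz : 0 < z) :
    besselI ν (2 * √z) =
      z ^ (ν / 2) * ∑' m : ℕ, z ^ m / (Nat.factorial m * Gamma (m + ν + 1)) := by
  rw [besselI, ← tsum_mul_left]
  refine tsum_congr fun m => ?_
  rw [mul_div_cancel_left₀ _ two_ne_zero, sqrt_eq_rpow, ← rpow_mul hz.le,
    show 1 / 2 * (2 * (m : ℝ) + ν) = ν / 2 + m by ring, rpow_add hz, rpow_natCast, mul_div_assoc]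

section LaguerreHeat

open ProbabilityTheory

lemma gammaPDFReal_add_one (k : ℝ) {b y : ℝ} (hb : 0 < b) (hy : 0 < y) :
    gammaPDFReal (k + 1) b y = b * (b * y) ^ k * exp (-(b * y)) / Gamma (k + 1) := by
  rw [gammaPDFReal, if_pos hy.le, rpow_add_one hb.ne', add_sub_cancel_right,
    mul_rpow hb.le hy.le]
  ring

/-- The one-dimensional Laguerre heat kernel of type `a` with respect to Lebesgue measure in `y`.
The time `s` enters through the variable `r = exp (-s)` of the defining formula of `plKernel`. -/
noncomputable def laguerreHeat (a x r y : ℝ) : ℝ :=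
  (1 - r)⁻¹ * ((y / x) ^ (a / 2) * exp (-((r * x + y) / (1 - r)) - a * log r / 2) *
    besselI a (2 * √(r * x * y) / (1 - r)))

lemma measurable_laguerreHeat (a x : ℝ) :
    Measurable fun p : ℝ × ℝ => laguerreHeat a x p.1 p.2 := by
  have hbessel : Measurable fun p : ℝ × ℝ => besselI a (2 * √(p.1 * x * p.2) / (1 - p.1)) :=
    (measurable_besselI a).comp (by fun_prop)
  unfold laguerreHeat
  fun_prop

variable {a x r : ℝ}

lemma laguerreHeat_eq_mul_tsum {y : ℝ} (hx : 0 < x) (hr : r ∈ Ioo 0 1) (hy : 0 < y) :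
    laguerreHeat a x r y =
      (1 - r)⁻¹ * ((1 - r)⁻¹ * y) ^ a * exp (-(r * x / (1 - r))) * exp (-((1 - r)⁻¹ * y)) *
        ∑' m : ℕ, (r * x / (1 - r) * ((1 - r)⁻¹ * y)) ^ m /
          (Nat.factorial m * Gamma (m + a + 1)) := by
  obtain ⟨hr0, hr1⟩ := hr
  have hq : 0 < 1 - r := sub_pos.2 hr1
  set z := r * x / (1 - r) * ((1 - r)⁻¹ * y) with hz
  have hz0 : 0 < z := by positivity
  have hsqrt : 2 * √(r * x * y) / (1 - r) = 2 * √z := by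
    rw [show z = r * x * y / (1 - r) ^ 2 by rw [hz]; field_simp, sqrt_div' _ (sq_nonneg _),
      sqrt_sq hq.le, mul_div_assoc]
  have hexp : exp (-((r * x + y) / (1 - r)) - a * log r / 2) =
      exp (-(r * x / (1 - r))) * exp (-((1 - r)⁻¹ * y)) * r⁻¹ ^ (a / 2) := by
    rw [rpow_def_of_pos (inv_pos.2 hr0), log_inv, ← exp_add, ← exp_add]
    congr 1
    field_simp
    ring
  have hpow : (y / x) ^ (a / 2) * r⁻¹ ^ (a / 2) * z ^ (a / 2) = ((1 - r)⁻¹ * y) ^ a := by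
    rw [← mul_rpow (by positivity) (by positivity), ← mul_rpow (by positivity) (by positivity),
      show y / x * r⁻¹ * z = ((1 - r)⁻¹ * y) ^ (2 : ℝ) by rw [hz, rpow_two]; field_simp,
      ← rpow_mul (by positivity), mul_div_cancel₀ _ two_ne_zero]
  rw [laguerreHeat, hsqrt, besselI_two_mul_sqrt a hz0, hexp, ← hpow]
  ring

lemma laguerreHeat_eq_tsum {y : ℝ} (hx : 0 < x) (hr : r ∈ Ioo 0 1) (hy : 0 < y) :
    laguerreHeat a x r y =
      ∑' m : ℕ, exp (-(r * x / (1 - r))) * (r * x / (1 - r)) ^ m / Nat.factorial m *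
        gammaPDFReal (m + a + 1) (1 - r)⁻¹ y := by
  have hq : 0 < (1 - r)⁻¹ := inv_pos.2 (sub_pos.2 hr.2)
  have hqy : 0 < (1 - r)⁻¹ * y := mul_pos hq hy
  rw [laguerreHeat_eq_mul_tsum hx hr hy, ← tsum_mul_left]
  refine tsum_congr fun m => ?_
  rw [gammaPDFReal_add_one _ hq hy, rpow_add hqy, rpow_natCast, mul_pow]
  ring

lemma lintegral_enorm_laguerreHeat_le_one (ha : -1 < a) (hx : 0 < x) (hr : r ∈ Ioo 0 1) :
    ∫⁻ y in Ioi 0, ‖laguerreHeat a x r y‖ₑ ≤ 1 := by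
  have hq : 0 < (1 - r)⁻¹ := inv_pos.2 (sub_pos.2 hr.2)
  have hshape (m : ℕ) : 0 < m + a + 1 := by linarith [m.cast_nonneg (α := ℝ)]
  obtain ⟨c, hc⟩ : ∃ c : NNReal, c = r * x / (1 - r) :=
    ⟨⟨_, (div_pos (mul_pos hr.1 hx) (sub_pos.2 hr.2)).le⟩, rfl⟩
  set w : ℕ → ℝ := fun m => exp (-c) * c ^ m / Nat.factorial m
  have hw0 (m : ℕ) : 0 ≤ w m := by positivity
  have hwsum : HasSum w 1 := hasSum_one_poissonMeasure c
  calc ∫⁻ y in Ioi 0, ‖laguerreHeat a x r y‖ₑ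
      ≤ ∫⁻ y in Ioi 0, ∑' m : ℕ, ENNReal.ofReal (w m) * gammaPDF (m + a + 1) (1 - r)⁻¹ y := by
        refine setLIntegral_mono' measurableSet_Ioi fun y hy => ?_
        rw [laguerreHeat_eq_tsum hx hr hy, ← hc]
        refine enorm_tsum_le_tsum_enorm.trans_eq (tsum_congr fun m => ?_)
        rw [enorm_mul, enorm_of_nonneg (hw0 m),
          enorm_of_nonneg (gammaPDFReal_nonneg (hshape m) hq y), gammaPDF]
    _ ≤ ∫⁻ y, ∑' m : ℕ, ENNReal.ofReal (w m) * gammaPDF (m + a + 1) (1 - r)⁻¹ y :=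
        setLIntegral_le_lintegral _ _
    _ = ∑' m, ENNReal.ofReal (w m) := by
        have hgamma (m : ℕ) : Measurable (gammaPDF (m + a + 1) (1 - r)⁻¹) :=
          (measurable_gammaPDFReal _ _).ennreal_ofReal
        rw [lintegral_tsum fun m => ((hgamma m).const_mul _).aemeasurable]
        simp only [lintegral_const_mul _ (hgamma _), lintegral_gammaPDF_eq_one (hshape _) hq,
          mul_one]
    _ = 1 := by
        rw [← ENNReal.ofReal_tsum_of_nonneg hw0 hwsum.summable, hwsum.tsum_eq, ENNReal.ofReal_one]

lemma integrableOn_laguerreHeat (ha : -1 < a) (hx : 0 < x) (hr : r ∈ Ioo 0 1) :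
    IntegrableOn (laguerreHeat a x r) (Ioi 0) :=
  ⟨((measurable_laguerreHeat a x).comp measurable_prodMk_left).aestronglyMeasurable,
    (lintegral_enorm_laguerreHeat_le_one ha hx hr).trans_lt ENNReal.one_lt_top⟩

end LaguerreHeat

section LaguerreHeatProd

lemma lintegral_enorm_fintype_prod_eq_prod {𝕜 ι : Type*} [RCLike 𝕜] [Fintype ι] {E : ι → Type*}
    {mE : ∀ i, MeasurableSpace (E i)} {μ : ∀ i, Measure (E i)} [∀ i, SigmaFinite (μ i)]
    {f : ∀ i, E i → 𝕜} (hf : ∀ i, Integrable (f i) (μ i)) :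
    ∫⁻ x, ‖∏ i, f i (x i)‖ₑ ∂Measure.pi μ = ∏ i, ∫⁻ x, ‖f i x‖ₑ ∂μ i := by
  simp only [← ofReal_integral_norm_eq_lintegral_enorm (.fintype_prod_dep hf),
    ← ofReal_integral_norm_eq_lintegral_enorm (hf _), norm_prod]
  rw [integral_fintype_prod_eq_prod fun i x => ‖f i x‖,
    ENNReal.ofReal_prod_of_nonneg fun i _ => integral_nonneg fun x => norm_nonneg _]

lemma volume_restrict_posOrthant (d : ℕ) :
    (volume : Measure (Fin d → ℝ)).restrict (posOrthant d) =
      Measure.pi fun _ => volume.restrict (Ioi 0) :=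
  Measure.restrict_pi_pi _ _

variable {d : ℕ} (α x : Fin d → ℝ)

/-- The `d`-dimensional Laguerre heat kernel, again in the variable `r = exp (-s)`. -/
noncomputable def laguerreHeatProd (r : ℝ) (y : Fin d → ℝ) : ℝ :=
  ∏ j, laguerreHeat (α j) (x j) r (y j)

lemma measurable_laguerreHeatProd :
    Measurable fun p : ℝ × (Fin d → ℝ) => laguerreHeatProd α x p.1 p.2 :=
  Finset.measurable_prod _ fun j _ => (measurable_laguerreHeat (α j) (x j)).comp
    (by fun_prop : Measurable fun p : ℝ × (Fin d → ℝ) => (p.1, p.2 j))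

lemma plKernel_eq_poissonSubordinate (t : ℝ) (y : Fin d → ℝ) :
    plKernel d α t x y = poissonSubordinate (fun s => laguerreHeatProd α x (exp (-s)) y) t := by
  rw [plKernel, integral_Ioo_zero_one_eq_integral_comp_exp_neg, ← integral_const_mul,
    poissonSubordinate]
  refine setIntegral_congr_fun measurableSet_Ioi fun s (hs : 0 < s) => ?_
  simp only [smul_eq_mul, log_exp, neg_neg, mul_neg, div_neg, levyDensity, laguerreHeatProd,
    laguerreHeat, Finset.prod_mul_distrib, Finset.prod_const, Finset.card_univ, Fintype.card_fin,
    rpow_neg hs.le, inv_pow]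
  field_simp

variable {α x}

lemma lintegral_enorm_laguerreHeatProd_le_one (hα : ∀ j, -1 < α j) (hx : x ∈ posOrthant d) {r : ℝ}
    (hr : r ∈ Ioo 0 1) : ∫⁻ y in posOrthant d, ‖laguerreHeatProd α x r y‖ₑ ≤ 1 := by
  simp only [volume_restrict_posOrthant, laguerreHeatProd]
  rw [lintegral_enorm_fintype_prod_eq_prod fun j =>
    integrableOn_laguerreHeat (hα j) (hx j trivial) hr]
  exact Finset.prod_le_one' fun j _ =>
    lintegral_enorm_laguerreHeat_le_one (hα j) (hx j trivial) hr

end LaguerreHeatProd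

theorem laguerre_poisson_kernel_deriv_L1_large_region_general (d : ℕ) (α : Fin d → ℝ)
    (hα : ∀ j, -1 < α j) {t : ℝ} (ht : 0 < t) {x : Fin d → ℝ} (hx : x ∈ posOrthant d) :
    (∀ᵐ y ∂volume.restrict (posOrthant d), DifferentiableAt ℝ (fun u => plKernel d α u x y) t) ∧
      IntegrableOn (fun y => deriv (fun u => plKernel d α u x y) t) (posOrthant d) ∧
      ∫ y in posOrthant d, |deriv (fun u => plKernel d α u x y) t| ≤ 2 / t := by
  have hmeas : StronglyMeasurable
      (Function.uncurry fun s y => laguerreHeatProd α x (exp (-s)) y) :=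
    ((measurable_laguerreHeatProd α x).comp
      (by fun_prop : Measurable fun p : ℝ × (Fin d → ℝ) => (exp (-p.1), p.2))).stronglyMeasurable
  have hcontr : ∀ s > 0, ∫⁻ y in posOrthant d, ‖laguerreHeatProd α x (exp (-s)) y‖ₑ ≤ 1 :=
    fun s hs => lintegral_enorm_laguerreHeatProd_le_one hα hx
      ⟨exp_pos _, exp_lt_one_iff.2 (neg_lt_zero.2 hs)⟩
  simp only [plKernel_eq_poissonSubordinate]
  exact ⟨(ae_hasDerivAt_poissonSubordinate hmeas hcontr ht).mono fun y hy => hy.differentiableAt,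
    integrable_deriv_poissonSubordinate hmeas hcontr ht,
    integral_norm_deriv_poissonSubordinate_le hmeas hcontr ht⟩

theorem laguerre_poisson_kernel_deriv_L1_large_region
    (d : ℕ) (hd : 1 ≤ d) (α : Fin d → ℝ) (hα : ∀ j, -(1 / 2 : ℝ) < α j) :
    ∃ C > 0, ∀ t > (0 : ℝ), ∀ x ∈ posOrthant d,
      (∫ y in {y : Fin d → ℝ | (∀ j, 0 < y j) ∧
          ∀ j, 1 - Real.exp (-t) < Real.sqrt (Real.exp (-t) * x j * y j)},
        |deriv (fun u => plKernel d α u x y) t|) ≤ C / t := by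
  refine ⟨2, two_pos, fun t ht x hx => ?_⟩
  obtain ⟨-, hint, hle⟩ := laguerre_poisson_kernel_deriv_L1_large_region_general d α
    (fun j => by linarith [hα j]) ht hx
  exact (setIntegral_mono_set hint.abs (.of_forall fun _ => abs_nonneg _)
    (.of_forall fun _ hy j _ => hy.1 j)).trans hle
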